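/- arXiv:1311.6175 — 2 statements merged into one kernel-verified Lean document; each statement's English description precedes it below -/
import Mathlib

section
/- Let n be a positive integer. The monoid IO_∞(ℤ^n_lex) is bisimple: for all α, β ∈ IO_∞(ℤ^n_lex) there exist γ, χ₁, χ₂, χ₃, χ₄ ∈ IO_∞(ℤ^n_lex) such that α·χ₁ = γ, γ·χ₂ = α, χ₃·γ = β and χ₄·β = γ (i.e., every two elements of IO_∞(ℤ^n_lex) are D-related, where D = R∘L with R and L Green's relations of mutual right, respectively left, divisibility). -/
/-- Composition of partial selfmaps (left map applied first):
`dom (PComp f g) = {x ∈ dom f : f x ∈ dom g}` and `(PComp f g) x = g (f x)`. -/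
def PComp {X : Type*} (f g : X → Option X) : X → Option X := fun x => (f x).bind g

/-- The identity partial selfmap (everywhere defined). -/
def PId {X : Type*} : X → Option X := fun x => some x

/-- A partial selfmap is injective. -/
def PInj {X : Type*} (f : X → Option X) : Prop :=
  ∀ ⦃x y a : X⦄, f x = some a → f y = some a → x = y

/-- A partial selfmap is monotone with respect to the relation `r`. -/
def PMono {X : Type*} (r : X → X → Prop) (f : X → Option X) : Prop :=
  ∀ ⦃x y a b : X⦄, r x y → f x = some a → f y = some b → r a b

/-- The domain of a partial selfmap is cofinite. -/
def DomCof {X : Type*} (f : X → Option X) : Prop := {x | f x = none}.Finite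

/-- The range (image) of a partial selfmap is cofinite. -/
def RanCof {X : Type*} (f : X → Option X) : Prop := {y | ∀ x, f x ≠ some y}.Finite

/-- `IOmap r f` says that `f` is a monotone (w.r.t. `r`) injective partial selfmap
with cofinite domain and cofinite image, i.e. an element of `IO_∞`. -/
def IOmap {X : Type*} (r : X → X → Prop) (f : X → Option X) : Prop :=
  PInj f ∧ PMono r f ∧ DomCof f ∧ RanCof f

/-- The lexicographic order on `L_n × ℤ` (with `L_n = Fin n`):
`(i,m) ≤ (j,k)` iff `i < j`, or `i = j` and `m ≤ k`. -/
def lexLe (n : ℕ) (p q : Fin n × ℤ) : Prop :=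
  p.1 < q.1 ∨ (p.1 = q.1 ∧ p.2 ≤ q.2)

/-- The domain of a partial selfmap, as a set. -/
def pdom {X : Type*} (f : X → Option X) : Set X := {x | ∃ y, f x = some y}

/-- The range (image) of a partial selfmap, as a set. -/
def pran {X : Type*} (f : X → Option X) : Set X := {y | ∃ x, f x = some y}

/-!
An element of `IO_∞` has an inverse in `IO_∞`, so two elements are `R`-related as soon as they have
the same domain and `L`-related as soon as they have the same image. It remains to find `γ` with the
domain of `α` and the image of `β`. In `ℤ` a point can be deleted by closing the gap, and this can
be done inside one fibre of a lexicographic product; iterating, the complement of any finite set is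
isomorphic to the whole order. Composing such an isomorphism from `dom α` with the inverse of one
from `ran β` gives `γ`.
-/

section PartialMap

variable {X : Type*} {f g : X → Option X} {x y z : X}

theorem pComp_eq_some_iff : PComp f g x = some z ↔ ∃ y, f x = some y ∧ g y = some z :=
  Option.bind_eq_some_iff

theorem compl_pdom : (pdom f)ᶜ = {x | f x = none} := by
  ext x
  exact not_exists.trans Option.eq_none_iff_forall_ne_some.symm

theorem compl_pran : (pran f)ᶜ = {y | ∀ x, f x ≠ some y} := by
  ext y
  exact not_exists

theorem domCof_iff : DomCof f ↔ (pdom f)ᶜ.Finite := by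
  rw [compl_pdom, DomCof]

theorem ranCof_iff : RanCof f ↔ (pran f)ᶜ.Finite := by
  rw [compl_pran, RanCof]

theorem mem_pdom_pComp : x ∈ pdom (PComp f g) ↔ ∃ y, f x = some y ∧ y ∈ pdom g := by
  simp only [pdom, Set.mem_ofPred_eq, pComp_eq_some_iff]
  tauto

theorem mem_pran_pComp : z ∈ pran (PComp f g) ↔ ∃ y ∈ pran f, g y = some z := by
  simp only [pran, Set.mem_ofPred_eq, pComp_eq_some_iff]
  tauto

theorem pdom_pComp_of_pran_subset (h : pran f ⊆ pdom g) : pdom (PComp f g) = pdom f := by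
  ext x
  rw [mem_pdom_pComp]
  exact ⟨fun ⟨y, hxy, _⟩ ↦ ⟨y, hxy⟩, fun ⟨y, hxy⟩ ↦ ⟨y, hxy, h ⟨x, hxy⟩⟩⟩

theorem pran_pComp_of_pdom_subset (h : pdom g ⊆ pran f) : pran (PComp f g) = pran g := by
  ext z
  rw [mem_pran_pComp]
  exact ⟨fun ⟨y, _, hyz⟩ ↦ ⟨y, hyz⟩, fun ⟨y, hyz⟩ ↦ ⟨y, h ⟨z, hyz⟩, hyz⟩⟩

theorem PInj.comp (hf : PInj f) (hg : PInj g) : PInj (PComp f g) := by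
  intro x x' z hx hx'
  obtain ⟨y, hxy, hyz⟩ := pComp_eq_some_iff.1 hx
  obtain ⟨y', hxy', hyz'⟩ := pComp_eq_some_iff.1 hx'
  obtain rfl := hg hyz hyz'
  exact hf hxy hxy'

theorem PMono.comp {r : X → X → Prop} (hf : PMono r f) (hg : PMono r g) :
    PMono r (PComp f g) := by
  intro x x' z z' hr hx hx'
  obtain ⟨y, hxy, hyz⟩ := pComp_eq_some_iff.1 hx
  obtain ⟨y', hxy', hyz'⟩ := pComp_eq_some_iff.1 hx'
  exact hg (hf hr hxy hxy') hyz hyz'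

theorem DomCof.comp (hf : DomCof f) (hinj : PInj f) (hg : DomCof g) : DomCof (PComp f g) := by
  have hfin : (f ⁻¹' (some '' {y | g y = none})).Finite := by
    refine (hg.image some).preimage ?_
    rintro x ⟨y, _, hy⟩ x' _ hxx'
    exact hinj hy.symm (hxx'.symm.trans hy.symm)
  refine (hf.union hfin).subset fun x hx ↦ ?_
  rcases hfx : f x with _ | y
  · exact Or.inl hfx
  · exact Or.inr ⟨y, Option.bind_eq_none_iff.1 hx y hfx, hfx.symm⟩

theorem RanCof.comp (hf : RanCof f) (hg : RanCof g) : RanCof (PComp f g) := by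
  rw [ranCof_iff] at hf hg ⊢
  have hfin : (some ⁻¹' (g '' (pran f)ᶜ)).Finite :=
    (hf.image g).preimage (Option.some_injective X).injOn
  refine (hg.union hfin).subset fun z hz ↦ or_iff_not_imp_left.2 fun hzg ↦ ?_
  obtain ⟨y, hyz⟩ := not_not.1 hzg
  exact ⟨y, fun hy ↦ hz (mem_pran_pComp.2 ⟨y, hy, hyz⟩), hyz⟩

theorem IOmap.comp {r : X → X → Prop} (hf : IOmap r f) (hg : IOmap r g) :
    IOmap r (PComp f g) :=
  ⟨hf.1.comp hg.1, hf.2.1.comp hg.2.1, hf.2.2.1.comp hf.1 hg.2.2.1, hf.2.2.2.comp hg.2.2.2⟩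

theorem pdom_PId : pdom (PId : X → Option X) = Set.univ :=
  Set.eq_univ_of_forall fun x ↦ ⟨x, rfl⟩

theorem pran_PId : pran (PId : X → Option X) = Set.univ :=
  Set.eq_univ_of_forall fun x ↦ ⟨x, rfl⟩

theorem PInj.id : PInj (PId : X → Option X) :=
  fun _ _ _ hx hy ↦ Option.some_injective X (hx.trans hy.symm)

theorem PMono.id (r : X → X → Prop) : PMono r PId := by
  rintro x y _ _ hxy ⟨⟩ ⟨⟩
  exact hxy

theorem IOmap.id (r : X → X → Prop) : IOmap r PId :=
  ⟨PInj.id, PMono.id r, by simp [domCof_iff, pdom_PId], by simp [ranCof_iff, pran_PId]⟩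

end PartialMap

section Inverse

variable {X : Type*} {f g : X → Option X} {r : X → X → Prop}

open Classical in
/-- The inverse of an injective partial selfmap. For a partial selfmap that is not injective it
picks an arbitrary preimage of each point of the image. -/
noncomputable def pinv (f : X → Option X) : X → Option X :=
  fun y ↦ if h : ∃ x, f x = some y then some h.choose else none

theorem PInj.pinv_eq_some_iff (hf : PInj f) {x y : X} : pinv f y = some x ↔ f x = some y := by
  unfold pinv
  split_ifs with h
  · rw [Option.some_inj]
    exact ⟨fun hx ↦ hx ▸ h.choose_spec, fun hx ↦ hf h.choose_spec hx⟩
  · exact iff_of_false not_false fun hx ↦ h ⟨x, hx⟩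

theorem PInj.pdom_pinv (hf : PInj f) : pdom (pinv f) = pran f := by
  simp only [pdom, pran, hf.pinv_eq_some_iff]

theorem PInj.pran_pinv (hf : PInj f) : pran (pinv f) = pdom f := by
  simp only [pdom, pran, hf.pinv_eq_some_iff]

theorem PInj.inv (hf : PInj f) : PInj (pinv f) := by
  intro x y a hx hy
  rw [hf.pinv_eq_some_iff] at hx hy
  exact Option.some_injective X (hx.symm.trans hy)

theorem PMono.inv [Std.Total r] [Std.Antisymm r] (hmono : PMono r f) (hinj : PInj f) :
    PMono r (pinv f) := by
  intro y y' x x' hyy' hy hy'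
  rw [hinj.pinv_eq_some_iff] at hy hy'
  rcases total_of r x x' with hxx' | hx'x
  · exact hxx'
  · obtain rfl : y = y' := antisymm hyy' (hmono hx'x hy' hy)
    rwa [hinj hy hy'] at hx'x ⊢

theorem IOmap.inv [Std.Total r] [Std.Antisymm r] (hf : IOmap r f) : IOmap r (pinv f) := by
  obtain ⟨hinj, hmono, hdom, hran⟩ := hf
  refine ⟨hinj.inv, hmono.inv hinj, ?_, ?_⟩
  · rwa [domCof_iff, hinj.pdom_pinv, ← ranCof_iff]
  · rwa [ranCof_iff, hinj.pran_pinv, ← domCof_iff]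

theorem PInj.pComp_pinv_pComp (hf : PInj f) (h : pdom g ⊆ pdom f) :
    PComp f (PComp (pinv f) g) = g := by
  refine funext fun x ↦ Option.ext fun z ↦ ?_
  simp only [pComp_eq_some_iff, hf.pinv_eq_some_iff]
  constructor
  · rintro ⟨y, hxy, x', hx'y, hx'z⟩
    rwa [hf hxy hx'y]
  · intro hxz
    obtain ⟨y, hxy⟩ := h ⟨z, hxz⟩
    exact ⟨y, hxy, x, hxy, hxz⟩

theorem PInj.pComp_pComp_pinv (hf : PInj f) (h : pran g ⊆ pran f) :
    PComp (PComp g (pinv f)) f = g := by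
  refine funext fun x ↦ Option.ext fun z ↦ ?_
  simp only [pComp_eq_some_iff, hf.pinv_eq_some_iff]
  constructor
  · rintro ⟨y, ⟨z', hxz', hyz'⟩, hyz⟩
    rw [hxz', ← hyz', hyz]
  · intro hxz
    obtain ⟨y, hyz⟩ := h ⟨x, hxz⟩
    exact ⟨y, ⟨z, hxz, hyz⟩, hyz⟩

theorem IOmap.exists_pComp_eq_of_pdom_subset [Std.Total r] [Std.Antisymm r]
    (hf : IOmap r f) (hg : IOmap r g) (h : pdom g ⊆ pdom f) :
    ∃ χ, IOmap r χ ∧ PComp f χ = g :=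
  ⟨PComp (pinv f) g, hf.inv.comp hg, hf.1.pComp_pinv_pComp h⟩

theorem IOmap.exists_pComp_eq_of_pran_subset [Std.Total r] [Std.Antisymm r]
    (hf : IOmap r f) (hg : IOmap r g) (h : pran g ⊆ pran f) :
    ∃ χ, IOmap r χ ∧ PComp χ f = g :=
  ⟨PComp g (pinv f), hg.comp hf.inv, hf.1.pComp_pComp_pinv h⟩

end Inverse

section PointDeletable

variable {X : Type*} {r : X → X → Prop}

/-- A relation is point-deletable if removing any single point leaves a relation isomorphic to the
original one. The isomorphism is encoded as a monotone injective partial selfmap from the complement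
of the point onto the whole type; its inverse is again monotone when `r` is total and antisymmetric,
the case the notion is meant for. -/
def PointDeletable (r : X → X → Prop) : Prop :=
  ∀ q, ∃ d, PInj d ∧ PMono r d ∧ pdom d = {q}ᶜ ∧ pran d = Set.univ

theorem PointDeletable.exists_pdom_eq_compl (hr : PointDeletable r) {S : Set X} (hS : S.Finite) :
    ∃ h, IOmap r h ∧ pdom h = Sᶜ ∧ pran h = Set.univ := by
  induction S, hS using Set.Finite.induction_on with
  | empty => exact ⟨PId, IOmap.id r, by rw [pdom_PId, Set.compl_empty], pran_PId⟩
  | @insert p S hpS _ ih =>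
    obtain ⟨h, hh, hdom, hran⟩ := ih
    obtain ⟨q, hpq⟩ : p ∈ pdom h := hdom ▸ hpS
    obtain ⟨d, dinj, dmono, ddom, dran⟩ := hr q
    have hd : IOmap r d :=
      ⟨dinj, dmono, by simp [domCof_iff, ddom], by simp [ranCof_iff, dran]⟩
    refine ⟨PComp h d, hh.comp hd, ?_, ?_⟩
    · have hne_iff {x y : X} (hxy : h x = some y) : y ≠ q ↔ x ≠ p :=
        not_congr ⟨fun hyq ↦ hh.1 hxy (hyq ▸ hpq),
          fun hxp ↦ Option.some_injective X (hxy.symm.trans (hxp ▸ hpq))⟩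
      ext x
      calc x ∈ pdom (PComp h d)
          ↔ ∃ y, h x = some y ∧ y ≠ q := by rw [mem_pdom_pComp, ddom]; rfl
        _ ↔ ∃ y, h x = some y ∧ x ≠ p := exists_congr fun y ↦ and_congr_right hne_iff
        _ ↔ x ∈ pdom h ∧ x ≠ p := exists_and_right
        _ ↔ x ∈ (insert p S)ᶜ := by
            rw [hdom, Set.mem_compl_iff, Set.mem_compl_iff, Set.mem_insert_iff, not_or, and_comm]
    · rw [pran_pComp_of_pdom_subset (hran ▸ Set.subset_univ _), dran]

theorem PointDeletable.exists_pdom_eq_pran_eq [Std.Total r] [Std.Antisymm r]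
    (hr : PointDeletable r) {A B : Set X} (hA : Aᶜ.Finite) (hB : Bᶜ.Finite) :
    ∃ γ, IOmap r γ ∧ pdom γ = A ∧ pran γ = B := by
  obtain ⟨h, hh, hdom, hran⟩ := hr.exists_pdom_eq_compl hA
  obtain ⟨k, hk, kdom, kran⟩ := hr.exists_pdom_eq_compl hB
  have hmatch : pran h = pdom (pinv k) := by rw [hran, hk.1.pdom_pinv, kran]
  refine ⟨PComp h (pinv k), hh.comp hk.inv, ?_, ?_⟩
  · rw [pdom_pComp_of_pran_subset hmatch.subset, hdom, compl_compl]
  · rw [pran_pComp_of_pdom_subset hmatch.superset, hk.1.pran_pinv, kdom, compl_compl]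

end PointDeletable

section Int

/-- The order isomorphism `ℤ \ {m} → ℤ` that closes the gap at `m`, as a partial selfmap. -/
def intDelete (m : ℤ) : ℤ → Option ℤ :=
  fun k ↦ if k = m then none else some (if k < m then k else k - 1)

theorem intDelete_eq_some_iff {m k l : ℤ} :
    intDelete m k = some l ↔ k < m ∧ l = k ∨ m < k ∧ l = k - 1 := by
  unfold intDelete
  grind

theorem pdom_intDelete (m : ℤ) : pdom (intDelete m) = {m}ᶜ := by
  rw [← compl_compl (pdom _), compl_pdom]
  simp [intDelete]

theorem pran_intDelete (m : ℤ) : pran (intDelete m) = Set.univ := by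
  refine Set.eq_univ_of_forall fun l ↦ ?_
  rcases lt_or_ge l m with hl | hl
  · exact ⟨l, intDelete_eq_some_iff.2 (by lia)⟩
  · exact ⟨l + 1, intDelete_eq_some_iff.2 (by lia)⟩

theorem pointDeletable_int_le : PointDeletable (· ≤ · : ℤ → ℤ → Prop) := by
  refine fun m ↦ ⟨intDelete m, ?_, ?_, pdom_intDelete m, pran_intDelete m⟩
  · intro k k' l hk hk'
    rw [intDelete_eq_some_iff] at hk hk'
    lia
  · intro k k' l l' hkk' hk hk'
    rw [intDelete_eq_some_iff] at hk hk'
    lia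

end Int

section Lex

variable {ι β : Type*} {h : ι → β → Option β}

/-- The partial selfmap of `ι × β` that acts on the fibre over `i` as the partial selfmap `h i`
of `β`. -/
def fiberMap (h : ι → β → Option β) : ι × β → Option (ι × β) :=
  fun x ↦ (h x.1 x.2).map (Prod.mk x.1)

theorem fiberMap_eq_some_iff {x y : ι × β} :
    fiberMap h x = some y ↔ x.1 = y.1 ∧ h x.1 x.2 = some y.2 := by
  simp only [fiberMap, Option.map_eq_some_iff, Prod.ext_iff]
  grind

theorem mem_pdom_fiberMap {x : ι × β} : x ∈ pdom (fiberMap h) ↔ x.2 ∈ pdom (h x.1) := by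
  simp [pdom, fiberMap_eq_some_iff]

theorem mem_pran_fiberMap {y : ι × β} : y ∈ pran (fiberMap h) ↔ y.2 ∈ pran (h y.1) := by
  simp [pran, fiberMap_eq_some_iff]

theorem PInj.fiberMap (hh : ∀ i, PInj (h i)) : PInj (fiberMap h) := by
  rintro ⟨i, a⟩ ⟨j, b⟩ ⟨k, c⟩ ha hb
  obtain ⟨rfl, hac⟩ := fiberMap_eq_some_iff.1 ha
  obtain ⟨rfl, hbc⟩ := fiberMap_eq_some_iff.1 hb
  exact congrArg _ (hh _ hac hbc)

theorem PMono.fiberMap {s : β → β → Prop} (r : ι → ι → Prop) (hh : ∀ i, PMono s (h i)) :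
    PMono (Prod.Lex r s) (fiberMap h) := by
  rintro ⟨i, a⟩ ⟨j, b⟩ ⟨i', a'⟩ ⟨j', b'⟩ hab ha hb
  obtain ⟨rfl, ha'⟩ := fiberMap_eq_some_iff.1 ha
  obtain ⟨rfl, hb'⟩ := fiberMap_eq_some_iff.1 hb
  cases hab with
  | left _ _ hij => exact .left _ _ hij
  | right _ hab => exact .right _ (hh _ hab ha' hb')

theorem PointDeletable.prodLex {s : β → β → Prop} (hs : PointDeletable s) (r : ι → ι → Prop) :
    PointDeletable (Prod.Lex r s) := by
  classical
  rintro ⟨i, b⟩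
  obtain ⟨d, dinj, dmono, ddom, dran⟩ := hs b
  let h : ι → β → Option β := Function.update (fun _ ↦ PId) i d
  have hinj (j : ι) : PInj (h j) :=
    (Function.forall_update_iff _ fun _ ↦ PInj).2 ⟨dinj, fun _ _ ↦ PInj.id⟩ j
  have hmono (j : ι) : PMono s (h j) :=
    (Function.forall_update_iff _ fun _ ↦ PMono s).2 ⟨dmono, fun _ _ ↦ PMono.id s⟩ j
  have hdom : pdom (fiberMap h) = {(i, b)}ᶜ := by
    ext ⟨j, c⟩
    rcases eq_or_ne j i with rfl | hj
    · simp [mem_pdom_fiberMap, h, ddom]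
    · simp [mem_pdom_fiberMap, h, pdom_PId, hj]
  have hran : pran (fiberMap h) = Set.univ := by
    refine Set.eq_univ_of_forall fun ⟨j, c⟩ ↦ mem_pran_fiberMap.2 ?_
    rcases eq_or_ne j i with rfl | hj
    · simp [h, dran]
    · simp [h, pran_PId, hj]
  exact ⟨fiberMap h, .fiberMap hinj, .fiberMap r hmono, hdom, hran⟩

theorem lexLe_eq_prodLex (n : ℕ) : lexLe n = Prod.Lex (· < ·) (· ≤ ·) :=
  funext₂ fun _ _ ↦ propext Prod.lex_def.symm

end Lex

theorem stmt7_general {X : Type*} {r : X → X → Prop} [Std.Total r] [Std.Antisymm r]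
    (hr : PointDeletable r) {f g : X → Option X} (hf : IOmap r f) (hg : IOmap r g) :
    ∃ γ χ₁ χ₂ χ₃ χ₄ : X → Option X,
      IOmap r γ ∧ IOmap r χ₁ ∧ IOmap r χ₂ ∧ IOmap r χ₃ ∧ IOmap r χ₄ ∧
      PComp f χ₁ = γ ∧ PComp γ χ₂ = f ∧ PComp χ₃ γ = g ∧ PComp χ₄ g = γ := by
  obtain ⟨γ, hγ, hdom, hran⟩ :=
    hr.exists_pdom_eq_pran_eq (domCof_iff.1 hf.2.2.1) (ranCof_iff.1 hg.2.2.2)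
  obtain ⟨χ₁, hχ₁, eq₁⟩ := hf.exists_pComp_eq_of_pdom_subset hγ hdom.subset
  obtain ⟨χ₂, hχ₂, eq₂⟩ := hγ.exists_pComp_eq_of_pdom_subset hf hdom.superset
  obtain ⟨χ₃, hχ₃, eq₃⟩ := hγ.exists_pComp_eq_of_pran_subset hg hran.superset
  obtain ⟨χ₄, hχ₄, eq₄⟩ := hg.exists_pComp_eq_of_pran_subset hγ hran.subset
  exact ⟨γ, χ₁, χ₂, χ₃, χ₄, hγ, hχ₁, hχ₂, hχ₃, hχ₄, eq₁, eq₂, eq₃, eq₄⟩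

/-- The monoid `IO_∞(ℤ^n_lex)` is bisimple: any two elements `α, β` are `D`-related,
i.e. there is `γ` with `α R γ` and `γ L β`. -/
theorem stmt7 (n : ℕ) (hn : 0 < n) (f g : Fin n × ℤ → Option (Fin n × ℤ))
    (hf : IOmap (lexLe n) f) (hg : IOmap (lexLe n) g) :
    ∃ γ χ₁ χ₂ χ₃ χ₄ : Fin n × ℤ → Option (Fin n × ℤ),
      IOmap (lexLe n) γ ∧ IOmap (lexLe n) χ₁ ∧ IOmap (lexLe n) χ₂ ∧
      IOmap (lexLe n) χ₃ ∧ IOmap (lexLe n) χ₄ ∧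
      PComp f χ₁ = γ ∧ PComp γ χ₂ = f ∧ PComp χ₃ γ = g ∧ PComp χ₄ g = γ := by
  rw [lexLe_eq_prodLex] at hf hg ⊢
  exact stmt7_general (pointDeletable_int_le.prodLex _) hf hg
end

section
/- Let n be a positive integer. Every maximal subgroup of IO_∞(ℤ^n_lex) is isomorphic to the direct power (ℤ(+))^n; concretely, for every cofinite subset A of L_n ×_lex ℤ, the group {α ∈ IO_∞(ℤ^n_lex) : dom α = ran α = A} under composition (the H-class of the idempotent id_A, i.e., the group of order automorphisms of A with the induced order) is isomorphic to (ℤ(+))^n. -/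
/-- The `H`-class of the idempotent `id_A` of `IO_∞(ℤ^n_lex)`, for a cofinite
subset `A` of `L_n ×_lex ℤ`: the maximal subgroup of all elements with domain and
range equal to `A`. -/
def Hclass (n : ℕ) (A : Set (Fin n × ℤ)) :=
  {f : Fin n × ℤ → Option (Fin n × ℤ) // IOmap (lexLe n) f ∧ pdom f = A ∧ pran f = A}

/-!
An element of the `H`-class of `id_A` is the same thing as an order automorphism of `A`, because
a monotone bijection of a chain onto itself is an order automorphism. Removing finitely many points
from a copy of `ℤ` leaves a chain still isomorphic to `ℤ`, so a cofinite `A ⊆ ι ×ₗ ℤ` is isomorphic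
to `ι ×ₗ ℤ`. An automorphism of `ι ×ₗ ℤ` preserves the covering relation, hence commutes with
`(i, m) ↦ (i, m + 1)`; it therefore acts as a translation between copies of `ℤ` and permutes the
copies by an automorphism of `ι`. If `ι` is rigid, as every well-ordered set is, only the
translations inside the copies remain, and they form `ι → ℤ`.
-/

/-! ### Partial selfmaps carried by a subset -/

section PartialSelfmaps

variable {X : Type*}

/-- Membership in the `H`-class of the idempotent `id_A` in the monoid of cofinite partial
selfmaps monotone for `r`; this is the predicate behind `Hclass`, for an arbitrary relation. -/
def InHClass (r : X → X → Prop) (A : Set X) (f : X → Option X) : Prop :=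
  IOmap r f ∧ pdom f = A ∧ pran f = A

theorem domCof_iff_finite_compl_pdom {f : X → Option X} : DomCof f ↔ (pdom f)ᶜ.Finite := by
  have : {x | f x = none} = (pdom f)ᶜ := by
    ext x
    simp [pdom, Option.eq_none_iff_forall_ne_some]
  rw [DomCof, this]

theorem ranCof_iff_finite_compl_pran {f : X → Option X} : RanCof f ↔ (pran f)ᶜ.Finite := by
  have : {y | ∀ x, f x ≠ some y} = (pran f)ᶜ := by
    ext y
    simp [pran]
  rw [RanCof, this]

variable {A : Set X}

open Classical in
/-- The partial selfmap of `X` with domain `A` that acts on `A` as `φ`. -/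
noncomputable def toPartial (φ : A → A) : X → Option X :=
  fun x => if hx : x ∈ A then some (φ ⟨x, hx⟩) else none

theorem toPartial_eq_some_iff {φ : A → A} {x y : X} :
    toPartial φ x = some y ↔ ∃ hx : x ∈ A, (φ ⟨x, hx⟩ : X) = y := by
  by_cases hx : x ∈ A <;> simp [toPartial, hx]

@[simp]
theorem toPartial_coe (φ : A → A) (a : A) : toPartial φ a = some (φ a : X) :=
  toPartial_eq_some_iff.2 ⟨a.2, rfl⟩

theorem toPartial_injective : Function.Injective (toPartial : (A → A) → X → Option X) := by
  intro φ ψ h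
  funext a
  have ha : some (φ a : X) = some (ψ a : X) := by rw [← toPartial_coe, h, toPartial_coe]
  exact Subtype.ext (Option.some.inj ha)

theorem pComp_toPartial (φ ψ : A → A) :
    PComp (toPartial φ) (toPartial ψ) = toPartial (ψ ∘ φ) := by
  funext x
  by_cases hx : x ∈ A <;> simp [PComp, toPartial, hx]

theorem pdom_toPartial (φ : A → A) : pdom (toPartial φ) = A := by
  ext x
  simp [pdom, toPartial_eq_some_iff]

theorem pran_toPartial {φ : A → A} (hφ : Function.Surjective φ) : pran (toPartial φ) = A := by
  refine Set.Subset.antisymm ?_ fun y hy => ?_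
  · rintro y ⟨x, hx⟩
    obtain ⟨hxA, rfl⟩ := toPartial_eq_some_iff.1 hx
    exact (φ ⟨x, hxA⟩).2
  · obtain ⟨a, ha⟩ := hφ ⟨y, hy⟩
    exact ⟨a, toPartial_eq_some_iff.2 ⟨a.2, congrArg Subtype.val ha⟩⟩

theorem pInj_toPartial {φ : A → A} (hφ : Function.Injective φ) : PInj (toPartial φ) := by
  intro x y a hx hy
  obtain ⟨hxA, rfl⟩ := toPartial_eq_some_iff.1 hx
  obtain ⟨hyA, h⟩ := toPartial_eq_some_iff.1 hy
  exact congrArg Subtype.val (hφ (Subtype.ext h)).symm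

theorem pMono_toPartial [Preorder X] {φ : A → A} (hφ : Monotone φ) :
    PMono (· ≤ ·) (toPartial φ) := by
  intro x y a b hxy hx hy
  obtain ⟨hxA, rfl⟩ := toPartial_eq_some_iff.1 hx
  obtain ⟨hyA, rfl⟩ := toPartial_eq_some_iff.1 hy
  exact hφ (a := ⟨x, hxA⟩) (b := ⟨y, hyA⟩) hxy

theorem inHClass_toPartial [Preorder X] (hA : Aᶜ.Finite) (φ : A ≃o A) :
    InHClass (· ≤ ·) A (toPartial φ) := by
  have hdom : pdom (toPartial φ) = A := pdom_toPartial φ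
  have hran : pran (toPartial φ) = A := pran_toPartial φ.surjective
  refine ⟨⟨pInj_toPartial φ.injective, pMono_toPartial φ.monotone, ?_, ?_⟩, hdom, hran⟩
  · rwa [domCof_iff_finite_compl_pdom, hdom]
  · rwa [ranCof_iff_finite_compl_pran, hran]

theorem exists_toPartial_eq {f : X → Option X} (hdom : pdom f = A) (hran : pran f ⊆ A) :
    ∃ φ : A → A, toPartial φ = f := by
  have hval : ∀ a : A, ∃ b : A, f a = some (b : X) := by
    rintro ⟨x, hx⟩
    obtain ⟨y, hy⟩ := hdom.ge hx
    exact ⟨⟨y, hran ⟨x, hy⟩⟩, hy⟩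
  choose φ hφ using hval
  refine ⟨φ, funext fun x => ?_⟩
  by_cases hx : x ∈ A
  · exact (toPartial_coe φ ⟨x, hx⟩).trans (hφ ⟨x, hx⟩).symm
  · have hfx : f x = none :=
      Option.eq_none_iff_forall_ne_some.2 fun y hy => hx (hdom.le ⟨y, hy⟩)
    simp [toPartial, hx, hfx]

theorem exists_orderIso_toPartial_eq [LinearOrder X] {f : X → Option X}
    (hf : InHClass (· ≤ ·) A f) : ∃ φ : A ≃o A, toPartial φ = f := by
  obtain ⟨⟨hinj, hmono, -, -⟩, hdom, hran⟩ := hf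
  obtain ⟨φ, rfl⟩ := exists_toPartial_eq hdom hran.le
  have φ_mono : Monotone φ := fun a b hab =>
    hmono hab (toPartial_coe φ a) (toPartial_coe φ b)
  have φ_inj : Function.Injective φ := fun a b hab =>
    Subtype.ext (hinj (toPartial_coe φ a) (hab ▸ toPartial_coe φ b))
  have φ_surj : Function.Surjective φ := by
    rintro ⟨y, hy⟩
    obtain ⟨x, hx⟩ := hran.ge hy
    obtain ⟨hxA, hxy⟩ := toPartial_eq_some_iff.1 hx
    exact ⟨⟨x, hxA⟩, Subtype.ext hxy⟩
  exact ⟨(φ_mono.strictMono_of_injective φ_inj).orderIsoOfSurjective φ φ_surj, rfl⟩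

/-- The bijection between order automorphisms of a cofinite subset `A` of a chain and the elements
of the `H`-class of `id_A`. -/
noncomputable def orderIsoEquivHClass [LinearOrder X] (hA : Aᶜ.Finite) :
    (A ≃o A) ≃ {f : X → Option X // InHClass (· ≤ ·) A f} :=
  Equiv.ofBijective (fun φ => ⟨toPartial φ, inHClass_toPartial hA φ⟩)
    ⟨fun _ _ h => DFunLike.coe_injective (toPartial_injective (congrArg Subtype.val h)),
      fun f => (exists_orderIso_toPartial_eq f.2).imp fun _ h => Subtype.ext h⟩

theorem pComp_orderIsoEquivHClass [LinearOrder X] (hA : Aᶜ.Finite) (φ ψ : A ≃o A) :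
    PComp (orderIsoEquivHClass hA φ).1 (orderIsoEquivHClass hA ψ).1 =
      (orderIsoEquivHClass hA (ψ * φ)).1 :=
  pComp_toPartial φ ψ

end PartialSelfmaps

/-! ### Cofinite subsets of a lexicographic product with `ℤ` -/

section CofiniteSubsets

theorem not_bddAbove_of_finite_compl {α : Type*} [Preorder α] [IsDirectedOrder α]
    [Nonempty α] [NoTopOrder α] {S : Set α} (hS : Sᶜ.Finite) : ¬BddAbove S := fun h =>
  not_bddAbove_univ (α := α) (by simpa using h.union hS.bddAbove)

theorem not_bddBelow_of_finite_compl {α : Type*} [Preorder α] [IsCodirectedOrder α]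
    [Nonempty α] [NoBotOrder α] {S : Set α} (hS : Sᶜ.Finite) : ¬BddBelow S :=
  not_bddAbove_of_finite_compl (α := αᵒᵈ) hS

theorem nonempty_orderIso_int_of_finite_compl {α : Type*} [LinearOrder α] [LocallyFiniteOrder α]
    [Nonempty α] [NoMaxOrder α] [NoMinOrder α] {S : Set α} (hS : Sᶜ.Finite) :
    Nonempty (S ≃o ℤ) := by
  classical
  have exists_gt := not_bddAbove_iff.1 (not_bddAbove_of_finite_compl hS)
  have exists_lt := not_bddBelow_iff.1 (not_bddBelow_of_finite_compl hS)
  have : Nonempty S :=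
    let ⟨b, hb, _⟩ := exists_gt (Classical.arbitrary α)
    ⟨⟨b, hb⟩⟩
  have : NoMaxOrder S := ⟨fun a => let ⟨b, hb, hab⟩ := exists_gt a; ⟨⟨b, hb⟩, hab⟩⟩
  have : NoMinOrder S := ⟨fun a => let ⟨b, hb, hba⟩ := exists_lt a; ⟨⟨b, hb⟩, hba⟩⟩
  let : LocallyFiniteOrder S := inferInstanceAs (LocallyFiniteOrder {x // x ∈ S})
  let : SuccOrder S := LinearLocallyFiniteOrder.succOrder S
  let : PredOrder S := LinearLocallyFiniteOrder.predOrder S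
  exact ⟨orderIsoIntOfLinearSuccPredArch⟩

variable {ι β : Type*}

/-- The part of `A ⊆ ι ×ₗ β` lying in the copy of `β` with index `i`. -/
def lexFiber (A : Set (ι ×ₗ β)) (i : ι) : Set β :=
  {b | toLex (i, b) ∈ A}

theorem finite_compl_lexFiber {A : Set (ι ×ₗ β)} (hA : Aᶜ.Finite) (i : ι) :
    (lexFiber A i)ᶜ.Finite :=
  hA.preimage (f := fun b => toLex (i, b)) fun _ _ _ _ h => (Prod.mk.inj (toLex.injective h)).2

theorem nonempty_orderIso_lex_of_lexFiber {γ : Type*} [LinearOrder ι] [Preorder β]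
    [LinearOrder γ] {A : Set (ι ×ₗ β)} (h : ∀ i, Nonempty (lexFiber A i ≃o γ)) :
    Nonempty (A ≃o ι ×ₗ γ) := by
  let e i := (h i).some.symm
  let φ : ι ×ₗ γ → A := fun p => ⟨toLex ((ofLex p).1, e (ofLex p).1 (ofLex p).2), (e _ _).2⟩
  have φ_strictMono : StrictMono φ := by
    intro p q hpq
    obtain ⟨⟨i, a⟩, rfl⟩ := toLex.surjective p
    obtain ⟨⟨j, b⟩, rfl⟩ := toLex.surjective q
    refine Prod.Lex.toLex_lt_toLex.2 ((Prod.Lex.toLex_lt_toLex.1 hpq).imp_right ?_)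
    rintro ⟨rfl : i = j, hab⟩
    exact ⟨rfl, (e i).strictMono hab⟩
  have φ_surj : Function.Surjective φ := by
    rintro ⟨p, hp⟩
    obtain ⟨⟨i, b⟩, rfl⟩ := toLex.surjective p
    refine ⟨toLex (i, (e i).symm ⟨b, hp⟩), Subtype.ext ?_⟩
    exact congrArg (fun c : lexFiber A i => toLex (i, (c : β))) ((e i).apply_symm_apply ⟨b, hp⟩)
  exact ⟨(φ_strictMono.orderIsoOfSurjective φ φ_surj).symm⟩

theorem nonempty_orderIso_lex_int_of_finite_compl [LinearOrder ι] {A : Set (ι ×ₗ ℤ)}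
    (hA : Aᶜ.Finite) : Nonempty (A ≃o ι ×ₗ ℤ) :=
  nonempty_orderIso_lex_of_lexFiber fun i =>
    nonempty_orderIso_int_of_finite_compl (finite_compl_lexFiber hA i)

end CofiniteSubsets

/-! ### Automorphisms of a lexicographic product with `ℤ` -/

/-- Conjugation by an order isomorphism, as an isomorphism of automorphism groups. -/
def orderAutCongr {α β : Type*} [LE α] [LE β] (e : α ≃o β) : (α ≃o α) ≃* (β ≃o β) where
  toFun φ := e.symm.trans (φ.trans e)
  invFun ψ := e.trans (ψ.trans e.symm)
  left_inv φ := by ext; simp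
  right_inv ψ := by ext; simp
  map_mul' φ ψ := by ext; simp

section LexShift

variable {ι α : Type*} [Preorder ι] [AddCommGroup α] [PartialOrder α] [IsOrderedAddMonoid α]

/-- The automorphism of `ι ×ₗ α` that translates the copy of `α` with index `i` by `c i`. -/
def lexShift (c : ι → α) : ι ×ₗ α ≃o ι ×ₗ α where
  toFun p := toLex ((ofLex p).1, (ofLex p).2 + c (ofLex p).1)
  invFun p := toLex ((ofLex p).1, (ofLex p).2 - c (ofLex p).1)
  left_inv p := by simp
  right_inv p := by simp
  map_rel_iff' {p q} := by
    simp only [Equiv.coe_fn_mk, Prod.Lex.le_iff, ofLex_toLex]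
    refine or_congr_right (and_congr_right fun h => ?_)
    rw [h, add_le_add_iff_right]

@[simp]
theorem fst_ofLex_lexShift (c : ι → α) (p : ι ×ₗ α) : (ofLex (lexShift c p)).1 = (ofLex p).1 :=
  rfl

@[simp]
theorem lexShift_toLex (c : ι → α) (i : ι) (a : α) :
    lexShift c (toLex (i, a)) = toLex (i, a + c i) :=
  rfl

theorem lexShift_add (c d : ι → α) : lexShift (c + d) = lexShift c * lexShift d := by
  ext p
  obtain ⟨⟨i, a⟩, rfl⟩ := toLex.surjective p
  simp [add_comm (c i), add_assoc]

theorem lexShift_zsmul (k : ℤ) (c : ι → α) : lexShift (k • c) = lexShift c ^ k :=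
  map_zpow (MonoidHom.mk' (fun d : Multiplicative (ι → α) => lexShift d.toAdd)
    fun d e => lexShift_add d.toAdd e.toAdd) (.ofAdd c) k

theorem lexShift_injective : Function.Injective (lexShift : (ι → α) → ι ×ₗ α ≃o ι ×ₗ α) := by
  intro c d h
  funext i
  have hi := DFunLike.congr_fun h (toLex (i, 0))
  simpa using hi

end LexShift

section LexInt

variable {ι : Type*}

theorem covBy_iff_lexShift_one_eq [Preorder ι] {p q : ι ×ₗ ℤ} :
    p ⋖ q ↔ lexShift 1 p = q := by
  obtain ⟨⟨i, k⟩, rfl⟩ := toLex.surjective p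
  obtain ⟨⟨j, m⟩, rfl⟩ := toLex.surjective q
  simp [Prod.Lex.toLex_covBy_toLex_iff, Order.covBy_iff_add_one_eq]

theorem commute_lexShift_one [Preorder ι] (F : ι ×ₗ ℤ ≃o ι ×ₗ ℤ) : Commute F (lexShift 1) := by
  ext p
  have hcov : F p ⋖ F (lexShift 1 p) :=
    (apply_covBy_apply_iff F).2 (covBy_iff_lexShift_one_eq.2 rfl)
  exact (covBy_iff_lexShift_one_eq.1 hcov).symm

theorem orderIso_apply_toLex [Preorder ι] (F : ι ×ₗ ℤ ≃o ι ×ₗ ℤ) (i : ι) (k : ℤ) :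
    F (toLex (i, k)) = lexShift (k • 1) (F (toLex (i, 0))) := by
  have hcomm : Commute F (lexShift (k • 1)) := by
    rw [lexShift_zsmul]
    exact (commute_lexShift_one F).zpow_right k
  calc F (toLex (i, k)) = F (lexShift (k • 1) (toLex (i, 0))) := by simp
    _ = lexShift (k • 1) (F (toLex (i, 0))) := DFunLike.congr_fun hcomm _

theorem fst_orderIso_apply_toLex_fst [Preorder ι] (F : ι ×ₗ ℤ ≃o ι ×ₗ ℤ) (p : ι ×ₗ ℤ) :
    (ofLex (F (toLex ((ofLex p).1, 0)))).1 = (ofLex (F p)).1 := by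
  obtain ⟨⟨i, k⟩, rfl⟩ := toLex.surjective p
  rw [orderIso_apply_toLex F i k, fst_ofLex_lexShift, ofLex_toLex]

theorem monotone_fst_orderIso_apply_toLex [PartialOrder ι] (F : ι ×ₗ ℤ ≃o ι ×ₗ ℤ) :
    Monotone fun i => (ofLex (F (toLex (i, 0)))).1 :=
  Prod.Lex.monotone_fst_ofLex.comp <| F.monotone.comp <|
    Prod.Lex.toLex_mono.comp (monotone_id.prodMk monotone_const)

/-- The automorphism of `ι` by which an automorphism of `ι ×ₗ ℤ` permutes the copies of `ℤ`. -/
def lexBase [PartialOrder ι] (F : ι ×ₗ ℤ ≃o ι ×ₗ ℤ) : ι ≃o ι :=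
  Equiv.toOrderIso
    { toFun i := (ofLex (F (toLex (i, 0)))).1
      invFun i := (ofLex (F.symm (toLex (i, 0)))).1
      left_inv i := by simp [fst_orderIso_apply_toLex_fst]
      right_inv i := by simp [fst_orderIso_apply_toLex_fst] }
    (monotone_fst_orderIso_apply_toLex F) (monotone_fst_orderIso_apply_toLex F.symm)

variable [PartialOrder ι] [Subsingleton (ι ≃o ι)]

theorem lexShift_surjective :
    Function.Surjective (lexShift : (ι → ℤ) → ι ×ₗ ℤ ≃o ι ×ₗ ℤ) := by
  intro F
  refine ⟨fun i => (ofLex (F (toLex (i, 0)))).2, ?_⟩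
  ext p
  obtain ⟨⟨i, k⟩, rfl⟩ := toLex.surjective p
  have hbase : (ofLex (F (toLex (i, 0)))).1 = i :=
    DFunLike.congr_fun (Subsingleton.elim (lexBase F) (.refl ι)) i
  have hzero : F (toLex (i, 0)) = toLex (i, (ofLex (F (toLex (i, 0)))).2) :=
    congrArg toLex (Prod.ext hbase rfl)
  rw [orderIso_apply_toLex F i k, hzero]
  simp [add_comm]

/-- For rigid `ι`, the automorphism group of `ι ×ₗ ℤ` is the direct power `ι → ℤ`. -/
noncomputable def lexShiftMulEquiv : Multiplicative (ι → ℤ) ≃* (ι ×ₗ ℤ ≃o ι ×ₗ ℤ) where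
  toEquiv := .ofBijective (fun c => lexShift c.toAdd) ⟨lexShift_injective, lexShift_surjective⟩
  map_mul' c d := lexShift_add c.toAdd d.toAdd

end LexInt

theorem stmt10_general {ι : Type*} [LinearOrder ι] [Subsingleton (ι ≃o ι)] (A : Set (ι ×ₗ ℤ))
    (hA : Aᶜ.Finite) :
    ∃ e : {f : ι ×ₗ ℤ → Option (ι ×ₗ ℤ) // InHClass (· ≤ ·) A f} ≃ (ι → ℤ),
      ∀ f g : {f : ι ×ₗ ℤ → Option (ι ×ₗ ℤ) // InHClass (· ≤ ·) A f},
        ∃ h : InHClass (· ≤ ·) A (PComp f.1 g.1), e ⟨PComp f.1 g.1, h⟩ = e f + e g := by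
  obtain ⟨ρ⟩ := nonempty_orderIso_lex_int_of_finite_compl hA
  let E := orderIsoEquivHClass hA
  let μ : (A ≃o A) ≃* Multiplicative (ι → ℤ) := (orderAutCongr ρ).trans lexShiftMulEquiv.symm
  refine ⟨E.symm.trans (μ.toEquiv.trans Multiplicative.toAdd), fun f g => ?_⟩
  obtain ⟨φ, rfl⟩ := E.surjective f
  obtain ⟨ψ, rfl⟩ := E.surjective g
  have hcomp : PComp (E φ).1 (E ψ).1 = (E (ψ * φ)).1 := pComp_orderIsoEquivHClass hA φ ψ
  refine ⟨hcomp ▸ (E (ψ * φ)).2, ?_⟩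
  simp [hcomp, add_comm]

theorem lexLe_eq_le (n : ℕ) :
    lexLe n = ((· ≤ ·) : Fin n ×ₗ ℤ → Fin n ×ₗ ℤ → Prop) := by
  funext p q
  exact propext Prod.Lex.toLex_le_toLex.symm

/-- Every maximal subgroup of `IO_∞(ℤ^n_lex)` is isomorphic to `(ℤ(+))^n`: for every
cofinite `A ⊆ L_n ×_lex ℤ`, the group of all elements of `IO_∞(ℤ^n_lex)` with domain
and range `A` (under composition) is isomorphic to the direct power `(ℤ(+))^n`. -/
theorem stmt10 (n : ℕ) (hn : 0 < n) (A : Set (Fin n × ℤ)) (hA : Aᶜ.Finite) :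
    ∃ e : Hclass n A ≃ (Fin n → ℤ),
      ∀ f g : Hclass n A,
        ∃ h : IOmap (lexLe n) (PComp f.1 g.1) ∧ pdom (PComp f.1 g.1) = A ∧
              pran (PComp f.1 g.1) = A,
          e ⟨PComp f.1 g.1, h⟩ = e f + e g := by
  have general := stmt10_general (ι := Fin n) A hA
  rwa [← lexLe_eq_le] at general
end
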